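/- arXiv:1401.1409 — 4 statements merged into one kernel-verified Lean document; each statement's English description precedes it below -/
import Mathlib

section
/- Suppose α : A → B is a total integral and M is a (B,A)-module. Define pr_M : M → M as the composite of ρ_M : M → M ⊗_R A, then id_M ⊗ (α ∘ S) : M ⊗_R A → M ⊗_R B, then the B-module action M ⊗_R B → M (so pr_M(m) = Σ α(S(m₍₁₎))·m₍₀₎). Then pr_M is R-linear, pr_M(m) lies in the invariants M^A for every m ∈ M (i.e. ρ_M(pr_M(m)) = pr_M(m) ⊗ 1), and pr_M(m) = m for every m ∈ M^A; in particular pr_M ∘ pr_M = pr_M, so pr_M is a projector of M onto M^A (a Reynolds operator). -/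
open TensorProduct

section ComodDefs

variable (R A : Type*) [CommRing R] [CommRing A] [HopfAlgebra R A]

/-- `ρ : M →ₗ[R] M ⊗[R] A` is a right `A`-comodule structure on `M`:
coassociativity and counitality. -/
def IsComodule {M : Type*} [AddCommGroup M] [Module R M]
    (ρ : M →ₗ[R] M ⊗[R] A) : Prop :=
  ((TensorProduct.assoc R M A A).toLinearMap ∘ₗ ρ.rTensor A ∘ₗ ρ
      = (LinearMap.lTensor M (Coalgebra.comul (R := R) (A := A))) ∘ₗ ρ)
  ∧ ((TensorProduct.rid R M).toLinearMap
      ∘ₗ (LinearMap.lTensor M (Coalgebra.counit (R := R) (A := A))) ∘ₗ ρ = LinearMap.id)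

/-- The invariants `M^A = {m : M | ρ m = m ⊗ 1}` of a comodule. -/
def comodInvariants {M : Type*} [AddCommGroup M] [Module R M]
    (ρ : M →ₗ[R] M ⊗[R] A) : Set M :=
  {m : M | ρ m = m ⊗ₜ[R] (1 : A)}

/-- `α : A → B` is a total integral for the comodule algebra `(B, ρB)`:
a unitary morphism of `A`-comodules. -/
def IsTotalIntegral {B : Type*} [CommRing B] [Algebra R B]
    (ρB : B →ₐ[R] B ⊗[R] A) (α : A →ₗ[R] B) : Prop :=
  α 1 = 1 ∧ ρB.toLinearMap ∘ₗ α
    = (α.rTensor A) ∘ₗ (Coalgebra.comul (R := R) (A := A))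

variable (B : Type*) [CommRing B] [Algebra R B]
variable (M : Type*) [AddCommGroup M] [Module R M] [Module B M] [IsScalarTower R B M]

/-- Scalar multiplication by `b : B` on `M`, as an `R`-linear map. -/
def bsmul (b : B) : M →ₗ[R] M where
  toFun m := b • m
  map_add' := smul_add b
  map_smul' r m := smul_comm b r m

/-- The action of `B ⊗[R] A` on `M ⊗[R] A` (`B` acting on the first factor, `A` by
multiplication on the second). -/
noncomputable def tensorAction : (B ⊗[R] A) →ₗ[R] (M ⊗[R] A) →ₗ[R] (M ⊗[R] A) :=
  TensorProduct.lift <| LinearMap.mk₂ R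
    (fun b a => TensorProduct.map (bsmul R B M b) (LinearMap.mulLeft R a))
    (fun b₁ b₂ a => by
      have h : bsmul R B M (b₁ + b₂) = bsmul R B M b₁ + bsmul R B M b₂ :=
        LinearMap.ext fun m => add_smul b₁ b₂ m
      simp only [h, TensorProduct.map_add_left])
    (fun r b a => by
      have h : bsmul R B M (r • b) = r • bsmul R B M b :=
        LinearMap.ext fun m => smul_assoc r b m
      simp only [h, TensorProduct.map_smul_left])
    (fun b a₁ a₂ => by
      have h : LinearMap.mulLeft R (a₁ + a₂)
          = LinearMap.mulLeft R a₁ + LinearMap.mulLeft R a₂ :=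
        LinearMap.ext fun x => add_mul a₁ a₂ x
      simp only [h, TensorProduct.map_add_right])
    (fun r b a => by
      have h : LinearMap.mulLeft R (r • a) = r • LinearMap.mulLeft R a :=
        LinearMap.ext fun x => smul_mul_assoc r a x
      simp only [h, TensorProduct.map_smul_right])

/-- `(M, ρM)` is a `(B,A)`-module over the comodule algebra `(B, ρB)`: a `B`-module and
a right `A`-comodule whose coaction is `B`-linear, i.e. `ρM (b • m) = ρB b • ρM m`. -/
def IsBAModule (ρB : B →ₐ[R] B ⊗[R] A) (ρM : M →ₗ[R] M ⊗[R] A) : Prop :=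
  IsComodule R A ρM ∧
    ∀ (b : B) (m : M), ρM (b • m) = tensorAction R A B M (ρB b) (ρM m)

/-- The action map `M ⊗[R] B →ₗ[R] M`, `m ⊗ b ↦ b • m`. -/
noncomputable def smulMB : M ⊗[R] B →ₗ[R] M :=
  TensorProduct.lift <| LinearMap.mk₂ R (fun m b => b • m)
    (fun m₁ m₂ b => smul_add b m₁ m₂)
    (fun r m b => smul_comm b r m)
    (fun m b₁ b₂ => add_smul b₁ b₂ m)
    (fun r m b => smul_assoc r b m)

/-- The Reynolds operator `pr_M : M → M`, `m ↦ Σ α (S m₍₁₎) • m₍₀₎`: the composite of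
`ρ_M : M → M ⊗ A`, then `id_M ⊗ (α ∘ S) : M ⊗ A → M ⊗ B`, then the `B`-action
`M ⊗ B → M`. -/
noncomputable def reynolds (α : A →ₗ[R] B) (ρM : M →ₗ[R] M ⊗[R] A) : M →ₗ[R] M :=
  smulMB R B M ∘ₗ (LinearMap.lTensor M (α ∘ₗ HopfAlgebra.antipode (R := R))) ∘ₗ ρM

end ComodDefs

/-!
In the convolution group of algebra homomorphisms `A → A ⊗ A`, the comultiplication `δ` is the
product of the two coprojections `a ↦ a ⊗ 1` and `a ↦ 1 ⊗ a`, and composition with the antipode is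
inversion. The group identity `y (x y)⁻¹ = x⁻¹` therefore says that
`Σ (1 ⊗ a₁) δ(S a₂) = S a ⊗ 1`. Applying `α ⊗ id`, the map `β = α ∘ S` satisfies
`Σ (1 ⊗ a₁) ρ_B(β a₂) = β a ⊗ 1`. By coassociativity and compatibility of the coaction with the
action,
`ρ_M(Σ β(m₍₁₎) m₍₀₎) = Σ ((1 ⊗ m₍₁₎) ρ_B(β m₍₂₎)) • (m₍₀₎ ⊗ 1) = Σ β(m₍₁₎) m₍₀₎ ⊗ 1`.
-/

section Antipode

open WithConv
open Algebra.TensorProduct (includeLeft includeRight)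

variable {R A : Type*} [CommSemiring R] [CommSemiring A]

theorem convMul_includeLeft_includeRight [Bialgebra R A] :
    toConv (includeLeft : A →ₐ[R] A ⊗[R] A) * toConv includeRight =
      toConv (Bialgebra.comulAlgHom R A) := by
  ext a
  rw [AlgHom.convMul_apply]
  exact DFunLike.congr_fun Algebra.TensorProduct.lift_includeLeft_includeRight (Coalgebra.comul a)

variable [HopfAlgebra R A]

theorem convMul_includeRight_comul_antipode :
    toConv (includeRight : A →ₐ[R] A ⊗[R] A).toLinearMap *
        toConv (Coalgebra.comul ∘ₗ HopfAlgebra.antipode R) =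
      toConv ((includeLeft : A →ₐ[R] A ⊗[R] A).toLinearMap ∘ₗ HopfAlgebra.antipode R) := by
  have right_mul_comul_inv : toConv (includeRight : A →ₐ[R] A ⊗[R] A) *
      (toConv (Bialgebra.comulAlgHom R A))⁻¹ = (toConv includeLeft)⁻¹ := calc
    _ = toConv includeRight * (toConv includeLeft * toConv includeRight)⁻¹ := by
      rw [convMul_includeLeft_includeRight]
    _ = toConv includeRight * ((toConv includeRight)⁻¹ * (toConv includeLeft)⁻¹) :=
      congrArg _ (mul_inv_rev _ _)
    _ = (toConv includeLeft)⁻¹ := mul_inv_cancel_left _ _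
  exact congrArg (fun f ↦ toConv f.ofConv.toLinearMap) right_mul_comul_inv

end Antipode

section IncludeRightMul

open Algebra.TensorProduct (includeLeft includeRight)

variable {R A B D W : Type*} [CommSemiring R] [Semiring B] [Algebra R B] [Semiring D] [Algebra R D]
  [AddCommMonoid W] [Module R W]

theorem rTensor_includeRight_mul [Semiring A] [Algebra R A]
    (α : D →ₗ[R] B) (a : A) (y : D ⊗[R] A) :
    α.rTensor A (includeRight a * y) = includeRight a * α.rTensor A y := by
  induction y with
  | zero => simp only [mul_zero, map_zero]
  | add y z hy hz => simp only [mul_add, map_add, hy, hz]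
  | tmul b c => simp only [Algebra.TensorProduct.includeRight_apply,
      Algebra.TensorProduct.tmul_mul_tmul, LinearMap.rTensor_tmul, one_mul]

/-- The linear map `A ⊗ W → B ⊗ A`, `a ⊗ w ↦ (1 ⊗ a) f(w)`, attached to `f : W → B ⊗ A`. For
`W = A`, precomposing it with the comultiplication gives the convolution product of `a ↦ 1 ⊗ a`
with `f`. -/
noncomputable def includeRightMul [Semiring A] [Algebra R A] (f : W →ₗ[R] B ⊗[R] A) :
    A ⊗[R] W →ₗ[R] B ⊗[R] A :=
  LinearMap.mul' R (B ⊗[R] A) ∘ₗ TensorProduct.map includeRight.toLinearMap f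

theorem includeRightMul_rTensor_comp [Semiring A] [Algebra R A]
    (α : D →ₗ[R] B) (f : W →ₗ[R] D ⊗[R] A) :
    includeRightMul (α.rTensor A ∘ₗ f) = α.rTensor A ∘ₗ includeRightMul f :=
  TensorProduct.ext' fun a w ↦ (rTensor_includeRight_mul α a (f w)).symm

variable [CommSemiring A] [HopfAlgebra R A]

theorem includeRightMul_comul_antipode_comp_comul :
    includeRightMul (Coalgebra.comul ∘ₗ HopfAlgebra.antipode R) ∘ₗ Coalgebra.comul =
      (includeLeft : A →ₐ[R] A ⊗[R] A).toLinearMap ∘ₗ HopfAlgebra.antipode R :=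
  congrArg WithConv.ofConv convMul_includeRight_comul_antipode

theorem includeRightMul_rTensor_comul_antipode_comp_comul (α : A →ₗ[R] B) :
    includeRightMul (α.rTensor A ∘ₗ Coalgebra.comul ∘ₗ HopfAlgebra.antipode R) ∘ₗ
        Coalgebra.comul =
      (includeLeft : B →ₐ[R] B ⊗[R] A).toLinearMap ∘ₗ α ∘ₗ HopfAlgebra.antipode R := by
  rw [includeRightMul_rTensor_comp, LinearMap.comp_assoc,
    includeRightMul_comul_antipode_comp_comul]
  rfl

end IncludeRightMul

section TensorAction

open Algebra.TensorProduct (includeLeft includeRight)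

variable {R A B M W W' : Type*} [CommRing R] [CommRing A] [HopfAlgebra R A]
  [CommRing B] [Algebra R B] [AddCommGroup M] [Module R M] [Module B M] [IsScalarTower R B M]
  [AddCommMonoid W] [Module R W] [AddCommMonoid W'] [Module R W']

theorem smulMB_tmul (m : M) (b : B) : smulMB R B M (m ⊗ₜ b) = b • m := rfl

theorem tensorAction_tmul_tmul (b : B) (a c : A) (m : M) :
    tensorAction R A B M (b ⊗ₜ a) (m ⊗ₜ c) = (b • m) ⊗ₜ (a * c) := rfl

theorem tensorAction_mul (x y : B ⊗[R] A) (z : M ⊗[R] A) :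
    tensorAction R A B M (x * y) z = tensorAction R A B M x (tensorAction R A B M y z) := by
  induction x with
  | zero => simp only [zero_mul, map_zero, LinearMap.zero_apply]
  | add x x' hx hx' => simp only [add_mul, map_add, LinearMap.add_apply, hx, hx']
  | tmul b a =>
    induction y with
    | zero => simp only [mul_zero, map_zero, LinearMap.zero_apply]
    | add y y' hy hy' => simp only [mul_add, map_add, LinearMap.add_apply, hy, hy']
    | tmul b' a' =>
      induction z with
      | zero => simp only [map_zero]
      | add z z' hz hz' => simp only [map_add, hz, hz']
      | tmul m c =>
        simp only [Algebra.TensorProduct.tmul_mul_tmul, tensorAction_tmul_tmul, mul_smul,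
          mul_assoc]

theorem tensorAction_includeRight_mul_tmul_one (y : B ⊗[R] A) (m : M) (a : A) :
    tensorAction R A B M (includeRight a * y) (m ⊗ₜ 1) = tensorAction R A B M y (m ⊗ₜ a) := by
  rw [mul_comm, tensorAction_mul, Algebra.TensorProduct.includeRight_apply,
    tensorAction_tmul_tmul, one_smul, mul_one]

/-- The linear map `M ⊗ W → M ⊗ A`, `m ⊗ w ↦ g w • (m ⊗ 1)`, attached to `g : W → B ⊗ A`. It turns
Sweedler sums `Σ g(w) • (m ⊗ 1)` into values of a linear map, so that coassociativity can be applied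
to its argument. -/
noncomputable def actOnTmulOne (g : W →ₗ[R] B ⊗[R] A) : M ⊗[R] W →ₗ[R] M ⊗[R] A :=
  TensorProduct.lift
    (((tensorAction R A B M).flip ∘ₗ (TensorProduct.mk R M A).flip 1).compl₂ g)

theorem actOnTmulOne_tmul (g : W →ₗ[R] B ⊗[R] A) (m : M) (w : W) :
    actOnTmulOne g (m ⊗ₜ w) = tensorAction R A B M (g w) (m ⊗ₜ 1) := rfl

theorem actOnTmulOne_lTensor (g : W' →ₗ[R] B ⊗[R] A) (h : W →ₗ[R] W') (x : M ⊗[R] W) :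
    actOnTmulOne g (h.lTensor M x) = actOnTmulOne (g ∘ₗ h) x := by
  induction x with
  | zero => simp only [map_zero]
  | add x y hx hy => simp only [map_add, hx, hy]
  | tmul m w => rfl

theorem actOnTmulOne_includeLeft (β : W →ₗ[R] B) (x : M ⊗[R] W) :
    actOnTmulOne ((includeLeft : B →ₐ[R] B ⊗[R] A).toLinearMap ∘ₗ β) x =
      smulMB R B M (β.lTensor M x) ⊗ₜ 1 := by
  induction x with
  | zero => simp only [map_zero, TensorProduct.zero_tmul]
  | add x y hx hy => simp only [map_add, TensorProduct.add_tmul, hx, hy]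
  | tmul m w =>
    simp only [actOnTmulOne_tmul, LinearMap.comp_apply, AlgHom.toLinearMap_apply,
      Algebra.TensorProduct.includeLeft_apply, tensorAction_tmul_tmul, LinearMap.lTensor_tmul,
      smulMB_tmul, mul_one]

theorem actOnTmulOne_assoc_tmul (f : W →ₗ[R] B ⊗[R] A) (x : M ⊗[R] A) (w : W) :
    actOnTmulOne (includeRightMul f) (TensorProduct.assoc R M A W (x ⊗ₜ w)) =
      tensorAction R A B M (f w) x := by
  induction x with
  | zero => simp only [TensorProduct.zero_tmul, map_zero]
  | add x y hx hy => simp only [TensorProduct.add_tmul, map_add, hx, hy]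
  | tmul m a => exact tensorAction_includeRight_mul_tmul_one (f w) m a

end TensorAction

section Reynolds

open Algebra.TensorProduct (includeLeft)

variable {R A B M : Type*} [CommRing R] [CommRing A] [HopfAlgebra R A]
  [CommRing B] [Algebra R B] [AddCommGroup M] [Module R M] [Module B M] [IsScalarTower R B M]
  {ρB : B →ₐ[R] B ⊗[R] A} {ρM : M →ₗ[R] M ⊗[R] A}

theorem coaction_smulMB_lTensor {W : Type*} [AddCommMonoid W] [Module R W]
    (hρ : ∀ (b : B) (m : M), ρM (b • m) = tensorAction R A B M (ρB b) (ρM m))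
    (β : W →ₗ[R] B) (x : M ⊗[R] W) :
    ρM (smulMB R B M (β.lTensor M x)) =
      actOnTmulOne (includeRightMul (ρB.toLinearMap ∘ₗ β))
        (TensorProduct.assoc R M A W (ρM.rTensor W x)) := by
  induction x with
  | zero => simp only [map_zero]
  | add x y hx hy => simp only [map_add, hx, hy]
  | tmul m w =>
    rw [LinearMap.lTensor_tmul, smulMB_tmul, hρ, LinearMap.rTensor_tmul, actOnTmulOne_assoc_tmul]
    rfl

theorem smulMB_lTensor_coaction_mem_comodInvariants (hM : IsBAModule R A B M ρB ρM)
    {β : A →ₗ[R] B}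
    (hβ : includeRightMul (ρB.toLinearMap ∘ₗ β) ∘ₗ Coalgebra.comul =
      (includeLeft : B →ₐ[R] B ⊗[R] A).toLinearMap ∘ₗ β) (m : M) :
    smulMB R B M (β.lTensor M (ρM m)) ∈ comodInvariants R A ρM := by
  obtain ⟨⟨coassoc, -⟩, coaction_smul⟩ := hM
  calc ρM (smulMB R B M (β.lTensor M (ρM m)))
      = actOnTmulOne (includeRightMul (ρB.toLinearMap ∘ₗ β))
          (TensorProduct.assoc R M A A (ρM.rTensor A (ρM m))) :=
        coaction_smulMB_lTensor coaction_smul β (ρM m)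
    _ = actOnTmulOne (includeRightMul (ρB.toLinearMap ∘ₗ β))
          (Coalgebra.comul.lTensor M (ρM m)) :=
        congrArg (actOnTmulOne _) (LinearMap.congr_fun coassoc m)
    _ = actOnTmulOne (includeLeft.toLinearMap ∘ₗ β) (ρM m) := by
        rw [actOnTmulOne_lTensor, hβ]
    _ = smulMB R B M (β.lTensor M (ρM m)) ⊗ₜ 1 := actOnTmulOne_includeLeft β (ρM m)

theorem reynolds_mem_comodInvariants {α : A →ₗ[R] B}
    (hα : ρB.toLinearMap ∘ₗ α = α.rTensor A ∘ₗ Coalgebra.comul)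
    (hM : IsBAModule R A B M ρB ρM) (m : M) :
    reynolds R A B M α ρM m ∈ comodInvariants R A ρM := by
  apply smulMB_lTensor_coaction_mem_comodInvariants hM
  rw [← LinearMap.comp_assoc, hα]
  exact includeRightMul_rTensor_comul_antipode_comp_comul α

theorem reynolds_eq_self_of_mem_comodInvariants {α : A →ₗ[R] B} (hα : α 1 = 1) {m : M}
    (hm : m ∈ comodInvariants R A ρM) : reynolds R A B M α ρM m = m := by
  have hm : ρM m = m ⊗ₜ 1 := hm
  simp only [reynolds, LinearMap.comp_apply, hm, LinearMap.lTensor_tmul, smulMB_tmul,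
    HopfAlgebra.antipode_one, hα, one_smul]

end Reynolds

/-- Given a total integral `α : A → B` and a `(B,A)`-module `M`, the Reynolds operator
`pr_M (m) = Σ α (S m₍₁₎) • m₍₀₎` (which is `R`-linear by construction) takes values in
the invariants `M^A`, restricts to the identity on `M^A`, and hence is idempotent:
a projector of `M` onto `M^A`. -/
theorem reynolds_projection_onto_invariants
    {R A B M : Type*} [CommRing R] [CommRing A] [HopfAlgebra R A]
    [CommRing B] [Algebra R B]
    [AddCommGroup M] [Module R M] [Module B M] [IsScalarTower R B M]
    (ρB : B →ₐ[R] B ⊗[R] A) (hB : IsComodule R A ρB.toLinearMap)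
    (α : A →ₗ[R] B) (hα : IsTotalIntegral R A ρB α)
    (ρM : M →ₗ[R] M ⊗[R] A) (hM : IsBAModule R A B M ρB ρM) :
    (∀ m : M, reynolds R A B M α ρM m ∈ comodInvariants R A ρM) ∧
    (∀ m ∈ comodInvariants R A ρM, reynolds R A B M α ρM m = m) ∧
    (∀ m : M, reynolds R A B M α ρM (reynolds R A B M α ρM m)
      = reynolds R A B M α ρM m) := by
  have mem_invariants := reynolds_mem_comodInvariants hα.2 hM
  have fixes_invariants : ∀ m ∈ comodInvariants R A ρM, reynolds R A B M α ρM m = m :=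
    fun _ hm ↦ reynolds_eq_self_of_mem_comodInvariants hα.1 hm
  exact ⟨mem_invariants, fixes_invariants, fun m ↦ fixes_invariants _ (mem_invariants m)⟩
end

section
/- Let B be an A-comodule algebra with invariants C = B^A. The base change C ⊗_R A is a Hopf algebra over C, coacting on itself via id_C ⊗ δ; B is a right (C ⊗_R A)-comodule via ρ_B followed by the canonical isomorphism B ⊗_R A ≅ B ⊗_C (C ⊗_R A); and C ⊗_R B is a right (C ⊗_R A)-comodule over C via id_C ⊗ ρ_B (followed by the canonical isomorphism (C ⊗_R B) ⊗_C (C ⊗_R A) ≅ C ⊗_R (B ⊗_R A)). Then the following are equivalent: (1) there exists a C-linear (C ⊗_R A)-comodule morphism C ⊗_R A → B sending 1⊗1 to 1_B; (2) there exists a total integral A → B; (3) there exists a C-linear (C ⊗_R A)-comodule morphism C ⊗_R A → C ⊗_R B sending 1⊗1 to 1⊗1. -/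
open TensorProduct

set_option synthInstance.maxHeartbeats 1000000
set_option maxHeartbeats 1000000

/-- The invariants `C = B^A` of a comodule algebra, as a subalgebra of `B`. -/
def invariantsSubalgebra (R A B : Type*) [CommRing R] [CommRing A] [HopfAlgebra R A]
    [CommRing B] [Algebra R B] (ρB : B →ₐ[R] B ⊗[R] A) : Subalgebra R B where
  carrier := comodInvariants R A ρB.toLinearMap
  mul_mem' := fun {a b} ha hb => by
    simp only [comodInvariants, Set.mem_setOf_eq, AlgHom.toLinearMap_apply] at *
    rw [map_mul, ha, hb, Algebra.TensorProduct.tmul_mul_tmul, one_mul]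
  one_mem' := by
    simp only [comodInvariants, Set.mem_setOf_eq, AlgHom.toLinearMap_apply, map_one,
      Algebra.TensorProduct.one_def]
  add_mem' := fun {a b} ha hb => by
    simp only [comodInvariants, Set.mem_setOf_eq] at *
    rw [map_add, ha, hb, TensorProduct.add_tmul]
  zero_mem' := by
    simp only [comodInvariants, Set.mem_setOf_eq, map_zero, TensorProduct.zero_tmul]
  algebraMap_mem' := fun r => by
    simp only [comodInvariants, Set.mem_setOf_eq, AlgHom.toLinearMap_apply,
      AlgHom.commutes, Algebra.TensorProduct.algebraMap_apply]

/-!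
A comodule morphism `α : M → P` extends to the comodule morphism `id ⊗ α : C ⊗ M → C ⊗ P`. If `C`
acts on `P` and the coaction of `P` is `C`-linear, the action map `C ⊗ P → P` is itself a comodule
morphism, so composing with it turns morphisms into `C ⊗ P` into morphisms into `P`. Restricting
along the comodule morphism `m ↦ 1 ⊗ m` leads back to morphisms `M → P`. The coaction of a comodule
algebra is linear over the invariants because it is multiplicative.
-/

section ComoduleHom

variable {R A M N P : Type*} [CommSemiring R] [AddCommMonoid A] [Module R A]
  [AddCommMonoid M] [Module R M] [AddCommMonoid N] [Module R N] [AddCommMonoid P] [Module R P]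
  {ρM : M →ₗ[R] M ⊗[R] A} {ρN : N →ₗ[R] N ⊗[R] A} {ρP : P →ₗ[R] P ⊗[R] A}

/-- `f : M → N` is a morphism of right comodules for the coactions `ρM` and `ρN`, which are encoded
as arbitrary linear maps. -/
def IsComoduleHom (ρM : M →ₗ[R] M ⊗[R] A) (ρN : N →ₗ[R] N ⊗[R] A) (f : M →ₗ[R] N) : Prop :=
  ρN ∘ₗ f = f.rTensor A ∘ₗ ρM

theorem IsComoduleHom.comp {g : N →ₗ[R] P} {f : M →ₗ[R] N}
    (hg : IsComoduleHom ρN ρP g) (hf : IsComoduleHom ρM ρN f) :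
    IsComoduleHom ρM ρP (g ∘ₗ f) :=
  calc ρP ∘ₗ g ∘ₗ f
    _ = g.rTensor A ∘ₗ ρN ∘ₗ f := by rw [← LinearMap.comp_assoc, hg, LinearMap.comp_assoc]
    _ = (g ∘ₗ f).rTensor A ∘ₗ ρM := by rw [hf, LinearMap.rTensor_comp, LinearMap.comp_assoc]

section LTensor

variable (C : Type*) [AddCommMonoid C] [Module R C]

/-- The coaction `id_C ⊗ ρ` on `C ⊗ M`, with values regarded in `(C ⊗ M) ⊗ A`. For an algebra `C`
it is the base change of `ρ`, under the identification `(C ⊗ M) ⊗_C (C ⊗ A) ≅ (C ⊗ M) ⊗ A`. -/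
noncomputable def lTensorCoaction (ρ : M →ₗ[R] M ⊗[R] A) : C ⊗[R] M →ₗ[R] (C ⊗[R] M) ⊗[R] A :=
  (TensorProduct.assoc R C M A).symm.toLinearMap ∘ₗ ρ.lTensor C

theorem isComoduleHom_lTensorCoaction_iff {f : N →ₗ[R] C ⊗[R] M} :
    IsComoduleHom ρN (lTensorCoaction C ρM) f ↔
      ρM.lTensor C ∘ₗ f = (TensorProduct.assoc R C M A).toLinearMap ∘ₗ f.rTensor A ∘ₗ ρN := by
  rw [IsComoduleHom, lTensorCoaction, LinearMap.comp_assoc,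
    LinearEquiv.toLinearMap_symm_comp_eq]

theorem IsComoduleHom.lTensor {f : M →ₗ[R] N} (hf : IsComoduleHom ρM ρN f) :
    IsComoduleHom (lTensorCoaction C ρM) (lTensorCoaction C ρN) (f.lTensor C) := by
  rw [IsComoduleHom, lTensorCoaction, lTensorCoaction, LinearMap.comp_assoc,
    ← LinearMap.lTensor_comp, hf, LinearMap.lTensor_comp, ← LinearMap.comp_assoc,
    ← LinearMap.rTensor_lTensor_comp_assoc_symm, LinearMap.comp_assoc]

variable {C}

theorem isComoduleHom_mk (c : C) :
    IsComoduleHom ρM (lTensorCoaction C ρM) (TensorProduct.mk R C M c) := by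
  have assoc_symm_comp_mk : (TensorProduct.assoc R C M A).symm.toLinearMap ∘ₗ
      TensorProduct.mk R C (M ⊗[R] A) c = (TensorProduct.mk R C M c).rTensor A :=
    TensorProduct.ext' fun _ _ => rfl
  exact congrArg (· ∘ₗ ρM) assoc_symm_comp_mk

end LTensor

section Action

variable {C : Type*} [CommSemiring C] [Algebra R C] [Module C P] [IsScalarTower R C P]

theorem isComoduleHom_liftBaseChange_id (hρ : ∀ (c : C) (p : P), ρP (c • p) = c • ρP p) :
    IsComoduleHom (lTensorCoaction C ρP) ρP
      (((LinearMap.id : P →ₗ[R] P).liftBaseChange C).restrictScalars R) := by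
  let μ : C ⊗[R] P →ₗ[R] P := ((LinearMap.id : P →ₗ[R] P).liftBaseChange C).restrictScalars R
  have rTensor_assoc_symm (c : C) (t : P ⊗[R] A) :
      μ.rTensor A ((TensorProduct.assoc R C P A).symm (c ⊗ₜ t)) = c • t := by
    induction t with
    | zero => simp
    | add x y hx hy => simp only [TensorProduct.tmul_add, map_add, hx, hy, smul_add]
    | tmul p a => rfl
  exact TensorProduct.ext' fun c p => (hρ c p).trans (rTensor_assoc_symm c (ρP p)).symm

theorem tame_iff_baseChanged_total_integrals_general
    (ρM : M →ₗ[R] M ⊗[R] A) (ρP : P →ₗ[R] P ⊗[R] A)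
    (hρ : ∀ (c : C) (p : P), ρP (c • p) = c • ρP p) (m : M) (p : P) :
    List.TFAE [
      ∃ β : C ⊗[R] M →ₗ[R] P, (∀ (c : C) (x : C ⊗[R] M), β (c • x) = c • β x) ∧
        β (1 ⊗ₜ m) = p ∧ IsComoduleHom (lTensorCoaction C ρM) ρP β,
      ∃ α : M →ₗ[R] P, α m = p ∧ IsComoduleHom ρM ρP α,
      ∃ γ : C ⊗[R] M →ₗ[R] C ⊗[R] P, (∀ (c : C) (x : C ⊗[R] M), γ (c • x) = c • γ x) ∧
        γ (1 ⊗ₜ m) = 1 ⊗ₜ p ∧ IsComoduleHom (lTensorCoaction C ρM) (lTensorCoaction C ρP) γ] := by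
  tfae_have 1 → 2 := fun ⟨β, _, hβ_pt, hβ⟩ =>
    ⟨β ∘ₗ TensorProduct.mk R C M 1, hβ_pt, hβ.comp (isComoduleHom_mk 1)⟩
  tfae_have 2 → 3 := fun ⟨α, hα_pt, hα⟩ =>
    ⟨α.lTensor C, (α.baseChange C).map_smul, by simp [hα_pt], hα.lTensor C⟩
  tfae_have 3 → 1 := fun ⟨γ, hγ_smul, hγ_pt, hγ⟩ =>
    ⟨((LinearMap.id : P →ₗ[R] P).liftBaseChange C).restrictScalars R ∘ₗ γ,
      by simp [hγ_smul], by simp [hγ_pt], (isComoduleHom_liftBaseChange_id hρ).comp hγ⟩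
  tfae_finish

end Action

end ComoduleHom

theorem map_invariantsSubalgebra_smul {R A B : Type*} [CommRing R] [CommRing A] [HopfAlgebra R A]
    [CommRing B] [Algebra R B] (ρB : B →ₐ[R] B ⊗[R] A) (c : invariantsSubalgebra R A B ρB)
    (b : B) : ρB (c • b) = c • ρB b :=
  have hc : ρB (c : B) = (c : B) ⊗ₜ 1 := c.2
  calc ρB (c • b)
    _ = ρB (c : B) * ρB b := map_mul ρB (c : B) b
    _ = ((c : B) ⊗ₜ 1) * ρB b := by rw [hc]
    _ = c • ρB b := (Algebra.smul_def c (ρB b)).symm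

/-- Let `B` be an `A`-comodule algebra with invariants `C = B^A`.  Under the canonical
identifications (`B ⊗_C (C ⊗_R A) ≅ B ⊗_R A`, `(C ⊗_R B) ⊗_C (C ⊗_R A) ≅ C ⊗_R (B ⊗_R A)`,
`(C ⊗_R A) ⊗_C (C ⊗_R A) ≅ C ⊗_R (A ⊗_R A)`, and with `C ⊗_R A` the base-changed Hopf
algebra over `C`, coacting on itself by `id_C ⊗ δ`), the following are equivalent:
(1) there is a unitary `C`-linear `(C ⊗_R A)`-comodule morphism `C ⊗_R A → B`;
(2) there is a total integral `A → B`;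
(3) there is a unitary `C`-linear `(C ⊗_R A)`-comodule morphism `C ⊗_R A → C ⊗_R B`. -/
theorem tame_iff_baseChanged_total_integrals
    {R A B : Type*} [CommRing R] [CommRing A] [HopfAlgebra R A]
    [CommRing B] [Algebra R B]
    (ρB : B →ₐ[R] B ⊗[R] A) (hB : IsComodule R A ρB.toLinearMap) :
    ((∃ β : (invariantsSubalgebra R A B ρB ⊗[R] A) →ₗ[R] B,
        (∀ (c : invariantsSubalgebra R A B ρB) (x : invariantsSubalgebra R A B ρB ⊗[R] A),
          β (c • x) = c • β x) ∧
        β ((1 : invariantsSubalgebra R A B ρB) ⊗ₜ[R] (1 : A)) = 1 ∧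
        ρB.toLinearMap ∘ₗ β
          = (β.rTensor A)
            ∘ₗ (TensorProduct.assoc R (invariantsSubalgebra R A B ρB) A A).symm.toLinearMap
            ∘ₗ LinearMap.lTensor (invariantsSubalgebra R A B ρB)
                (Coalgebra.comul (R := R) (A := A)))
      ↔ ∃ α : A →ₗ[R] B, IsTotalIntegral R A ρB α) ∧
    ((∃ α : A →ₗ[R] B, IsTotalIntegral R A ρB α)
      ↔ ∃ γ : (invariantsSubalgebra R A B ρB ⊗[R] A) →ₗ[R]
            (invariantsSubalgebra R A B ρB ⊗[R] B),
        (∀ (c : invariantsSubalgebra R A B ρB) (x : invariantsSubalgebra R A B ρB ⊗[R] A),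
          γ (c • x) = c • γ x) ∧
        γ ((1 : invariantsSubalgebra R A B ρB) ⊗ₜ[R] (1 : A))
          = (1 : invariantsSubalgebra R A B ρB) ⊗ₜ[R] (1 : B) ∧
        LinearMap.lTensor (invariantsSubalgebra R A B ρB) ρB.toLinearMap ∘ₗ γ
          = (TensorProduct.assoc R (invariantsSubalgebra R A B ρB) B A).toLinearMap
            ∘ₗ (γ.rTensor A)
            ∘ₗ (TensorProduct.assoc R (invariantsSubalgebra R A B ρB) A A).symm.toLinearMap
            ∘ₗ LinearMap.lTensor (invariantsSubalgebra R A B ρB)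
                (Coalgebra.comul (R := R) (A := A))) := by
  simp only [IsTotalIntegral, ← isComoduleHom_lTensorCoaction_iff]
  have h := tame_iff_baseChanged_total_integrals_general (Coalgebra.comul (R := R) (A := A))
    ρB.toLinearMap (map_invariantsSubalgebra_smul ρB) 1 1
  exact ⟨h.out 0 1, h.out 1 2⟩
end

section
/- Assume A is flat as an R-module. Let B be a right A-comodule and let M be a left A-comodule that is finitely presented and flat (equivalently, finitely generated projective) as an R-module. Endow M* = Hom_R(M,R) with the right A-comodule structure ρ_{M*} (which exists and is unique because M is finitely generated projective) characterized by Σ f₍₀₎(m)·f₍₁₎ = Σ f(m₍₀₎)·S(m₍₋₁₎) in A for all f ∈ M* and m ∈ M, and endow B ⊗_R M* with the codiagonal right A-coaction ρ(b ⊗ f) = Σ (b₍₀₎ ⊗ f₍₀₎) ⊗ b₍₁₎·f₍₁₎. Let Com_A(M,B) = {h ∈ Hom_R(M,B) : ρ_B(h(m)) = Σ h(m₍₀₎) ⊗ m₍₋₁₎ for all m ∈ M} be the R-module of comodule morphisms from M to B. Then the canonical R-linear map B ⊗_R M* → Hom_R(M,B), b ⊗ f ↦ (m ↦ f(m)·b),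 restricts to an R-module isomorphism (B ⊗_R M*)^A ≅ Com_A(M,B), natural in M. -/
open TensorProduct

section Stmt8Defs

variable (R A : Type*) [CommRing R] [CommRing A] [HopfAlgebra R A]

/-- `ρ' : M →ₗ[R] A ⊗[R] M` is a left `A`-comodule structure on `M`. -/
def IsLeftComodule {M : Type*} [AddCommGroup M] [Module R M]
    (ρ' : M →ₗ[R] A ⊗[R] M) : Prop :=
  ((TensorProduct.assoc R A A M).toLinearMap
      ∘ₗ ((Coalgebra.comul (R := R) (A := A)).rTensor M) ∘ₗ ρ'
    = (LinearMap.lTensor A ρ') ∘ₗ ρ')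
  ∧ ((TensorProduct.lid R M).toLinearMap
      ∘ₗ ((Coalgebra.counit (R := R) (A := A)).rTensor M) ∘ₗ ρ' = LinearMap.id)

variable {R A} in
/-- `ρD` is the right `A`-comodule structure on `M* = Hom_R(M, R)` dual to the left
comodule structure `ρ'` on `M`, i.e. it satisfies
`Σ f₍₀₎(m) • f₍₁₎ = Σ f(m₍₀₎) • S(m₍₋₁₎)` for all `f ∈ M*`, `m ∈ M`. -/
def IsDualCoaction {M : Type*} [AddCommGroup M] [Module R M]
    (ρ' : M →ₗ[R] A ⊗[R] M)
    (ρD : Module.Dual R M →ₗ[R] Module.Dual R M ⊗[R] A) : Prop :=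
  ∀ (f : Module.Dual R M) (m : M),
    (TensorProduct.lid R A) (((Module.Dual.eval R M m).rTensor A) (ρD f))
      = (TensorProduct.rid R A)
          ((TensorProduct.map (HopfAlgebra.antipode (R := R)) f) (ρ' m))

variable (B M : Type*) [AddCommGroup B] [Module R B] [AddCommGroup M] [Module R M]

/-- The codiagonal right `A`-coaction on `B ⊗_R M*`:
`b ⊗ f ↦ Σ (b₍₀₎ ⊗ f₍₀₎) ⊗ b₍₁₎ f₍₁₎`. -/
noncomputable def codiagCoaction (ρB : B →ₗ[R] B ⊗[R] A)
    (ρD : Module.Dual R M →ₗ[R] Module.Dual R M ⊗[R] A) :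
    (B ⊗[R] Module.Dual R M) →ₗ[R] (B ⊗[R] Module.Dual R M) ⊗[R] A :=
  (LinearMap.lTensor (B ⊗[R] Module.Dual R M) (LinearMap.mul' R A))
    ∘ₗ (TensorProduct.tensorTensorTensorComm R B A (Module.Dual R M) A).toLinearMap
    ∘ₗ (TensorProduct.map ρB ρD)

/-- The `R`-module `Com_A(M, B)` of comodule morphisms from a left `A`-comodule `M` to a
right `A`-comodule `B`: maps `h` with `ρ_B (h m) = Σ h(m₍₀₎) ⊗ m₍₋₁₎`. -/
def comodMorphisms (ρB : B →ₗ[R] B ⊗[R] A) (ρ' : M →ₗ[R] A ⊗[R] M) :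
    Set (M →ₗ[R] B) :=
  {h | ∀ m : M, ρB (h m)
    = (TensorProduct.comm R A B) ((TensorProduct.map LinearMap.id h) (ρ' m))}

/-- The canonical map `B ⊗_R M* → Hom_R(M, B)`, `b ⊗ f ↦ (m ↦ f m • b)`. -/
noncomputable def canonicalHom :
    (B ⊗[R] Module.Dual R M) →ₗ[R] (M →ₗ[R] B) :=
  (dualTensorHom R M B) ∘ₗ (TensorProduct.comm R B (Module.Dual R M)).toLinearMap

end Stmt8Defs

/-!
`Hom_R(A, A)` with convolution acts on `Hom_R(M, A ⊗ B)`. In this action the invariance of a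
tensor `x` with image `h : M → B` reads `S • (ρ_B ∘ h) = 1 ⊗ h`, where `(1 ⊗ h) m = 1 ⊗ h m` and
`ρ_B` is read with values in `A ⊗ B`, and `h` is a comodule morphism iff
`ρ_B ∘ h = id • (1 ⊗ h)`. These are equivalent because the antipode `S` is the convolution
inverse of `id`. Finite projectivity of `M` makes it possible to test invariance on `Hom_R(M, -)`.
-/

open WithConv

section ConvolutionAction

section Module

variable {R C S M N P : Type*} [CommSemiring R] [AddCommMonoid C] [Module R C]
  [CommSemiring S] [Algebra R S] [AddCommMonoid M] [Module R M]
  [AddCommMonoid N] [Module R N] [Module S N] [IsScalarTower R S N]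
  [AddCommMonoid P] [Module R P]

/-- The linear map `c ⊗ m ↦ u c • φ m` into an `S`-module. Composed with a coaction
`M → C ⊗ M` it gives the convolution action `convSMul`. -/
noncomputable def smulLift (u : C →ₗ[R] S) (φ : M →ₗ[R] N) : C ⊗[R] M →ₗ[R] N :=
  (φ.liftBaseChange S).restrictScalars R ∘ₗ u.rTensor M

@[simp]
theorem smulLift_tmul (u : C →ₗ[R] S) (φ : M →ₗ[R] N) (c : C) (m : M) :
    smulLift u φ (c ⊗ₜ m) = u c • φ m := rfl

/-- The action of the convolution algebra `Hom_R(C, S)` on `Hom_R(M, N)`, for a left coaction `ρ`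
of `C` on `M` and an `S`-module `N`: `u` sends `φ` to `m ↦ Σ u(m₍₋₁₎) • φ(m₍₀₎)`. It is a plain
function rather than a `Module` instance because it depends on `ρ`. -/
noncomputable def convSMul (ρ : M →ₗ[R] C ⊗[R] M) (u : WithConv (C →ₗ[R] S)) (φ : M →ₗ[R] N) :
    M →ₗ[R] N :=
  smulLift u.ofConv φ ∘ₗ ρ

variable (ρ : M →ₗ[R] C ⊗[R] M) (u : WithConv (C →ₗ[R] S))

theorem convSMul_zero : convSMul ρ u (0 : M →ₗ[R] N) = 0 := by
  simp [convSMul, smulLift]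

theorem convSMul_add (φ ψ : M →ₗ[R] N) :
    convSMul ρ u (φ + ψ) = convSMul ρ u φ + convSMul ρ u ψ := by
  simp [convSMul, smulLift, LinearMap.add_comp]

theorem convSMul_smulRight_apply (f : Module.Dual R M) (n : N) (m : M) :
    convSMul ρ u (f.smulRight n) m =
      TensorProduct.rid R S (TensorProduct.map u.ofConv f (ρ m)) • n := by
  have smulLift_smulRight : smulLift u.ofConv (f.smulRight n) =
      (LinearMap.toSpanSingleton S N n).restrictScalars R ∘ₗ
        (TensorProduct.rid R S).toLinearMap ∘ₗ TensorProduct.map u.ofConv f := by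
    ext c m
    simp [smul_comm (u.ofConv c)]
  exact LinearMap.congr_fun smulLift_smulRight (ρ m)

theorem convSMul_mk_one_comp (h : M →ₗ[R] P) :
    convSMul ρ u (TensorProduct.mk R S P 1 ∘ₗ h) = TensorProduct.map u.ofConv h ∘ₗ ρ := by
  rw [convSMul]
  congr 1
  ext c m
  simp [TensorProduct.smul_tmul']

end Module

section Coalgebra

variable {R C S M N : Type*} [CommSemiring R] [AddCommMonoid C] [Module R C] [Coalgebra R C]
  [CommSemiring S] [Algebra R S] [AddCommMonoid M] [Module R M]
  [AddCommMonoid N] [Module R N] [Module S N] [IsScalarTower R S N]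

theorem smulLift_smulLift (u v : WithConv (C →ₗ[R] S)) (φ : M →ₗ[R] N) :
    smulLift u.ofConv (smulLift v.ofConv φ) ∘ₗ (TensorProduct.assoc R C C M).toLinearMap ∘ₗ
      Coalgebra.comul.rTensor M = smulLift (u * v).ofConv φ := by
  have comp_assoc : smulLift u.ofConv (smulLift v.ofConv φ) ∘ₗ
        (TensorProduct.assoc R C C M).toLinearMap =
      smulLift (LinearMap.mul' R S ∘ₗ TensorProduct.map u.ofConv v.ofConv) φ := by
    ext c d m
    simp [mul_smul]
  rw [← LinearMap.comp_assoc, comp_assoc]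
  ext c m
  simp

theorem smulLift_one (φ : M →ₗ[R] N) :
    smulLift (1 : WithConv (C →ₗ[R] S)).ofConv φ =
      φ ∘ₗ (TensorProduct.lid R M).toLinearMap ∘ₗ
        (Coalgebra.counit (R := R) (A := C)).rTensor M := by
  ext c m
  simp [LinearMap.convOne_def]

end Coalgebra

namespace IsLeftComodule

variable {R A S M N : Type*} [CommRing R] [CommRing A] [HopfAlgebra R A]
  [CommSemiring S] [Algebra R S] [AddCommGroup M] [Module R M]
  [AddCommMonoid N] [Module R N] [Module S N] [IsScalarTower R S N]
  {ρ : M →ₗ[R] A ⊗[R] M}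

theorem convSMul_convSMul (hM : IsLeftComodule R A ρ) (u v : WithConv (A →ₗ[R] S))
    (φ : M →ₗ[R] N) :
    convSMul ρ u (convSMul ρ v φ) = convSMul ρ (u * v) φ := by
  calc convSMul ρ u (convSMul ρ v φ)
    _ = smulLift u.ofConv (smulLift v.ofConv φ) ∘ₗ ρ.lTensor A ∘ₗ ρ := by
      rw [convSMul, ← LinearMap.comp_assoc]
      congr 1
      ext a m
      simp [convSMul]
    _ = (smulLift u.ofConv (smulLift v.ofConv φ) ∘ₗ
        (TensorProduct.assoc R A A M).toLinearMap ∘ₗ Coalgebra.comul.rTensor M) ∘ₗ ρ := by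
      rw [← hM.1]
      rfl
    _ = convSMul ρ (u * v) φ := by
      rw [smulLift_smulLift, convSMul]

theorem one_convSMul (hM : IsLeftComodule R A ρ) (φ : M →ₗ[R] N) :
    convSMul ρ (1 : WithConv (A →ₗ[R] S)) φ = φ := by
  rw [convSMul, smulLift_one, LinearMap.comp_assoc, LinearMap.comp_assoc, hM.2, LinearMap.comp_id]

theorem antipode_convSMul_eq_iff [Module A N] [IsScalarTower R A N]
    (hM : IsLeftComodule R A ρ) {φ ψ : M →ₗ[R] N} :
    convSMul ρ (toConv (HopfAlgebra.antipode R (A := A))) φ = ψ ↔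
      φ = convSMul ρ (toConv (LinearMap.id : A →ₗ[R] A)) ψ := by
  constructor
  · rintro rfl
    rw [hM.convSMul_convSMul, LinearMap.id_mul_antipode, hM.one_convSMul]
  · rintro rfl
    rw [hM.convSMul_convSMul, LinearMap.antipode_mul_id, hM.one_convSMul]

end IsLeftComodule

end ConvolutionAction

section CanonicalHom

variable {R B M : Type*} [CommRing R] [AddCommGroup B] [Module R B] [AddCommGroup M] [Module R M]

theorem canonicalHom_tmul (b : B) (f : Module.Dual R M) :
    canonicalHom R B M (b ⊗ₜ f) = f.smulRight b := rfl

theorem canonicalHom_bijective [Module.Finite R M] [Module.Projective R M] :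
    Function.Bijective (canonicalHom R B M) :=
  dualTensorHom_bijective.comp (TensorProduct.comm R B (Module.Dual R M)).bijective

theorem canonicalHom_lTensor_dualMap {M' : Type*} [AddCommGroup M'] [Module R M']
    (g : M' →ₗ[R] M) (x : B ⊗[R] Module.Dual R M) :
    canonicalHom R B M' (g.dualMap.lTensor B x) = canonicalHom R B M x ∘ₗ g := by
  induction x with
  | zero => simp
  | add x y hx hy => simp only [map_add, hx, hy, LinearMap.add_comp]
  | tmul b f => rfl

section Module

variable {C : Type*} [AddCommGroup C] [Module R C]

variable (R B M C) in
/-- The canonical map with coefficients in a module `C`, `(b ⊗ f) ⊗ c ↦ (m ↦ f m • (c ⊗ b))`,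
through which elements of `(B ⊗ M*) ⊗ C` are compared. The factor `C` is moved to the left because
Mathlib lets an algebra `C` act on `C ⊗ B` through the left factor. -/
noncomputable def canonicalHomTensor :
    (B ⊗[R] Module.Dual R M) ⊗[R] C →ₗ[R] (M →ₗ[R] C ⊗[R] B) :=
  canonicalHom R (C ⊗[R] B) M ∘ₗ
    (TensorProduct.comm R (B ⊗[R] Module.Dual R M) C ≪≫ₗ
      (TensorProduct.assoc R C B (Module.Dual R M)).symm).toLinearMap

theorem canonicalHomTensor_tmul_tmul (b : B) (f : Module.Dual R M) (c : C) :
    canonicalHomTensor R B M C ((b ⊗ₜ f) ⊗ₜ c) = f.smulRight (c ⊗ₜ b) := rfl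

theorem canonicalHomTensor_injective [Module.Finite R M] [Module.Projective R M] :
    Function.Injective (canonicalHomTensor R B M C) :=
  canonicalHom_bijective.injective.comp (LinearEquiv.injective _)

theorem canonicalHomTensor_tmul (x : B ⊗[R] Module.Dual R M) (c : C) :
    canonicalHomTensor R B M C (x ⊗ₜ c) = TensorProduct.mk R C B c ∘ₗ canonicalHom R B M x := by
  induction x with
  | zero => simp
  | add x y hx hy => simp only [TensorProduct.add_tmul, map_add, hx, hy, LinearMap.comp_add]
  | tmul b f =>
    ext m
    simp [canonicalHomTensor_tmul_tmul, canonicalHom_tmul]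

end Module

theorem canonicalHomTensor_mul_apply {A : Type*} [CommRing A] [Algebra R A] (p : B ⊗[R] A)
    (q : Module.Dual R M ⊗[R] A) (m : M) :
    canonicalHomTensor R B M A ((LinearMap.mul' R A).lTensor (B ⊗[R] Module.Dual R M)
        (TensorProduct.tensorTensorTensorComm R B A (Module.Dual R M) A (p ⊗ₜ q))) m =
      TensorProduct.lid R A ((Module.Dual.eval R M m).rTensor A q) •
        TensorProduct.comm R B A p := by
  induction p with
  | zero => simp
  | add x y hx hy =>
    simp only [TensorProduct.add_tmul, map_add, LinearMap.add_apply, hx, hy, smul_add]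
  | tmul b a =>
    induction q with
    | zero => simp
    | add x y hx hy =>
      simp only [TensorProduct.tmul_add, map_add, LinearMap.add_apply, hx, hy, add_smul]
    | tmul f a' =>
      simp [canonicalHomTensor_tmul_tmul, TensorProduct.smul_tmul', mul_comm]

end CanonicalHom

section Invariants

variable {R A B M : Type*} [CommRing R] [CommRing A] [HopfAlgebra R A]
  [AddCommGroup B] [Module R B] [AddCommGroup M] [Module R M]
  {ρB : B →ₗ[R] B ⊗[R] A} {ρM : M →ₗ[R] A ⊗[R] M}
  {ρD : Module.Dual R M →ₗ[R] Module.Dual R M ⊗[R] A}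

theorem IsDualCoaction.canonicalHomTensor_codiagCoaction (hdual : IsDualCoaction ρM ρD)
    (x : B ⊗[R] Module.Dual R M) :
    canonicalHomTensor R B M A (codiagCoaction R A B M ρB ρD x) =
      convSMul ρM (toConv (HopfAlgebra.antipode R (A := A)))
        ((TensorProduct.comm R B A).toLinearMap ∘ₗ ρB ∘ₗ canonicalHom R B M x) := by
  induction x with
  | zero => simp [convSMul_zero]
  | add x y hx hy => simp only [map_add, hx, hy, LinearMap.comp_add, convSMul_add]
  | tmul b f =>
    ext m
    have comp_smulRight : (TensorProduct.comm R B A).toLinearMap ∘ₗ ρB ∘ₗ f.smulRight b =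
        f.smulRight (TensorProduct.comm R B A (ρB b)) := by
      ext
      simp
    rw [canonicalHom_tmul, comp_smulRight, convSMul_smulRight_apply, ofConv_toConv, ← hdual,
      ← canonicalHomTensor_mul_apply]
    rfl

theorem mem_comodMorphisms_iff {h : M →ₗ[R] B} :
    h ∈ comodMorphisms R A B M ρB ρM ↔
      (TensorProduct.comm R B A).toLinearMap ∘ₗ ρB ∘ₗ h =
        convSMul ρM (toConv (LinearMap.id : A →ₗ[R] A)) (TensorProduct.mk R A B 1 ∘ₗ h) := by
  rw [convSMul_mk_one_comp, LinearMap.ext_iff]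
  exact forall_congr' fun m => (TensorProduct.comm R B A).eq_symm_apply

theorem comp_mem_comodMorphisms {M' : Type*} [AddCommGroup M'] [Module R M']
    {ρM' : M' →ₗ[R] A ⊗[R] M'} {g : M' →ₗ[R] M} (hg : ρM ∘ₗ g = g.lTensor A ∘ₗ ρM')
    {h : M →ₗ[R] B} (hh : h ∈ comodMorphisms R A B M ρB ρM) :
    h ∘ₗ g ∈ comodMorphisms R A B M' ρB ρM' := by
  intro m
  have hgm : ρM (g m) = g.lTensor A (ρM' m) := LinearMap.congr_fun hg m
  rw [LinearMap.comp_apply, hh, hgm, ← LinearMap.lTensor_def, ← LinearMap.lTensor_def,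
    LinearMap.lTensor_comp_apply]

theorem comodInvariants_codiagCoaction [Module.Finite R M] [Module.Projective R M]
    (hM : IsLeftComodule R A ρM) (hdual : IsDualCoaction ρM ρD) :
    comodInvariants R A (codiagCoaction R A B M ρB ρD) =
      canonicalHom R B M ⁻¹' comodMorphisms R A B M ρB ρM := by
  ext x
  calc x ∈ comodInvariants R A (codiagCoaction R A B M ρB ρD)
    _ ↔ canonicalHomTensor R B M A (codiagCoaction R A B M ρB ρD x) =
        canonicalHomTensor R B M A (x ⊗ₜ 1) :=
      canonicalHomTensor_injective.eq_iff.symm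
    _ ↔ canonicalHom R B M x ∈ comodMorphisms R A B M ρB ρM := by
      rw [hdual.canonicalHomTensor_codiagCoaction, canonicalHomTensor_tmul,
        hM.antipode_convSMul_eq_iff, mem_comodMorphisms_iff]

end Invariants

theorem invariants_tensor_dual_iso_comodMorphisms_general
    {R A B M M' : Type*} [CommRing R] [CommRing A] [HopfAlgebra R A]
    [AddCommGroup B] [Module R B]
    [AddCommGroup M] [Module R M] [Module.Finite R M] [Module.Projective R M]
    [AddCommGroup M'] [Module R M'] [Module.Finite R M'] [Module.Projective R M']
    (ρB : B →ₗ[R] B ⊗[R] A)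
    (ρM : M →ₗ[R] A ⊗[R] M) (hM : IsLeftComodule R A ρM)
    (ρD : Module.Dual R M →ₗ[R] Module.Dual R M ⊗[R] A) (hdual : IsDualCoaction ρM ρD)
    (ρM' : M' →ₗ[R] A ⊗[R] M') (hM' : IsLeftComodule R A ρM')
    (ρD' : Module.Dual R M' →ₗ[R] Module.Dual R M' ⊗[R] A) (hdual' : IsDualCoaction ρM' ρD')
    (g : M' →ₗ[R] M) (hg : ρM ∘ₗ g = g.lTensor A ∘ₗ ρM') :
    Set.InjOn (canonicalHom R B M) (comodInvariants R A (codiagCoaction R A B M ρB ρD)) ∧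
    canonicalHom R B M '' comodInvariants R A (codiagCoaction R A B M ρB ρD) =
      comodMorphisms R A B M ρB ρM ∧
    g.dualMap.lTensor B '' comodInvariants R A (codiagCoaction R A B M ρB ρD) ⊆
      comodInvariants R A (codiagCoaction R A B M' ρB ρD') ∧
    ∀ x : B ⊗[R] Module.Dual R M,
      canonicalHom R B M' (g.dualMap.lTensor B x) = canonicalHom R B M x ∘ₗ g := by
  rw [comodInvariants_codiagCoaction hM hdual, comodInvariants_codiagCoaction hM' hdual']
  refine ⟨canonicalHom_bijective.injective.injOn,
    Set.image_preimage_eq _ canonicalHom_bijective.surjective, ?_,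
    canonicalHom_lTensor_dualMap g⟩
  rintro _ ⟨x, hx, rfl⟩
  rw [Set.mem_preimage, canonicalHom_lTensor_dualMap]
  exact comp_mem_comodMorphisms hg hx

/-- Assume `A` is flat over `R`.  Let `B` be a right `A`-comodule and `M` a left
`A`-comodule which is finitely generated projective over `R`, with dual right coaction
`ρD` on `M*`.  Then the canonical map `B ⊗_R M* → Hom_R(M,B)`, `b ⊗ f ↦ (m ↦ f m • b)`,
restricts to an isomorphism `(B ⊗_R M*)^A ≅ Com_A(M, B)`, naturally in `M`. -/
theorem invariants_tensor_dual_iso_comodMorphisms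
    {R A B M : Type*} [CommRing R] [CommRing A] [HopfAlgebra R A] [Module.Flat R A]
    [AddCommGroup B] [Module R B]
    [AddCommGroup M] [Module R M] [Module.Finite R M] [Module.Projective R M]
    (ρB : B →ₗ[R] B ⊗[R] A) (hB : IsComodule R A ρB)
    (ρ'M : M →ₗ[R] A ⊗[R] M) (hM : IsLeftComodule R A ρ'M)
    (ρD : Module.Dual R M →ₗ[R] Module.Dual R M ⊗[R] A)
    (hρD : IsComodule R A ρD) (hdual : IsDualCoaction ρ'M ρD)
    -- data for naturality in `M`: a second such comodule `M'` and a morphism `g : M' → M`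
    (M' : Type*) [AddCommGroup M'] [Module R M'] [Module.Finite R M']
    [Module.Projective R M']
    (ρ'M' : M' →ₗ[R] A ⊗[R] M') (hM' : IsLeftComodule R A ρ'M')
    (ρD' : Module.Dual R M' →ₗ[R] Module.Dual R M' ⊗[R] A)
    (hρD' : IsComodule R A ρD') (hdual' : IsDualCoaction ρ'M' ρD')
    (g : M' →ₗ[R] M) (hg : ρ'M ∘ₗ g = (LinearMap.lTensor A g) ∘ₗ ρ'M') :
    -- the canonical map is injective on invariants ...
    Set.InjOn (canonicalHom R B M) (comodInvariants R A (codiagCoaction R A B M ρB ρD)) ∧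
    -- ... with image exactly the comodule morphisms `Com_A(M, B)` ...
    (canonicalHom R B M '' comodInvariants R A (codiagCoaction R A B M ρB ρD)
      = comodMorphisms R A B M ρB ρ'M) ∧
    -- ... and this identification is natural in `M`:
    ((LinearMap.lTensor B g.dualMap) ''
        comodInvariants R A (codiagCoaction R A B M ρB ρD)
      ⊆ comodInvariants R A (codiagCoaction R A B M' ρB ρD')) ∧
    (∀ x : B ⊗[R] Module.Dual R M,
      canonicalHom R B M' ((LinearMap.lTensor B g.dualMap) x)
        = (canonicalHom R B M x) ∘ₗ g) := by
  exact invariants_tensor_dual_iso_comodMorphisms_general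
    ρB ρ'M hM ρD hdual ρ'M' hM' ρD' hdual' g hg
end

section
/- Assume R is noetherian and A is finitely generated and projective (finite locally free) as an R-module. Then the following are equivalent: (1) the functor of invariants on right A-comodules is exact, i.e., for every surjective morphism of right A-comodules M → N the induced map M^A → N^A is surjective (the finite flat group scheme whose Hopf algebra of functions is A is linearly reductive); (2) there exists an R-linear map α : A → R with α(1_A) = 1 and Σ α(a₁)·a₂ = α(a)·1_A for all a ∈ A (a total integral for the trivial action, so that the trivial action of the group scheme on Spec R is tame). -/
open TensorProduct

universe u

/-!
A functional `β` on `A` acts on every comodule by `β ⇀ m = Σ β(m₍₁₎) m₍₀₎`, naturally in the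
comodule. If `β` is a left integral, `Σ β(a₂) a₁ = β(a) 1`, then `β ⇀ m` is always invariant, and
if moreover `β(1) = 1`, invariant elements are fixed. Hence `β ⇀ -` turns any preimage of an
invariant element into an invariant preimage.

Conversely, since `A` is finite projective, `A* ⊗ A ≃ End(A)`, and the action of `A*` on `A` makes
`A*` a comodule whose invariants are exactly the left integrals. Evaluation at `1` is a surjective
morphism from `A*` to the trivial comodule `R`, so lifting `1 ∈ R` to an invariant gives a left
integral `β` with `β(1) = 1`. Composition with the antipode exchanges left and right integrals,
because the antipode reverses the comultiplication.
-/

section DualAction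

open Coalgebra

variable {R C M N : Type*} [CommRing R] [AddCommGroup C] [Module R C] [AddCommGroup M]
  [Module R M] [AddCommGroup N] [Module R N]

lemma map_rid_lTensor (f : M →ₗ[R] N) (β : Module.Dual R C) (t : M ⊗[R] C) :
    f (TensorProduct.rid R M (β.lTensor M t)) =
      TensorProduct.rid R N (β.lTensor N (f.rTensor C t)) := by
  have h : f ∘ₗ (TensorProduct.rid R M).toLinearMap ∘ₗ β.lTensor M =
      (TensorProduct.rid R N).toLinearMap ∘ₗ β.lTensor N ∘ₗ f.rTensor C := by
    ext; simp
  exact LinearMap.congr_fun h t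

/-- The action `β ⇀ m = Σ β(m₍₁₎) m₍₀₎` of functionals on `C` by endomorphisms of a module `M` with
coaction `ρ`. For `ρ = comul` this is the left action of `C*` on `C`. -/
noncomputable def dualAction (ρ : M →ₗ[R] M ⊗[R] C) : Module.Dual R C →ₗ[R] Module.End R M where
  toFun β := (TensorProduct.rid R M).toLinearMap ∘ₗ β.lTensor M ∘ₗ ρ
  map_add' β γ := by ext; simp [LinearMap.lTensor_add]
  map_smul' r β := by ext; simp [LinearMap.lTensor_smul]

lemma dualAction_apply (ρ : M →ₗ[R] M ⊗[R] C) (β : Module.Dual R C) (m : M) :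
    dualAction ρ β m = TensorProduct.rid R M (β.lTensor M (ρ m)) :=
  rfl

lemma map_dualAction {ρM : M →ₗ[R] M ⊗[R] C} {ρN : N →ₗ[R] N ⊗[R] C} {f : M →ₗ[R] N}
    (hf : ρN ∘ₗ f = f.rTensor C ∘ₗ ρM) (β : Module.Dual R C) (m : M) :
    f (dualAction ρM β m) = dualAction ρN β (f m) := by
  have hfm : ρN (f m) = f.rTensor C (ρM m) := LinearMap.congr_fun hf m
  rw [dualAction_apply, dualAction_apply, map_rid_lTensor, hfm]

lemma counit_dualAction_comul [Coalgebra R C] (β : Module.Dual R C) (c : C) :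
    counit (R := R) (dualAction comul β c) = β c := by
  rw [dualAction_apply, map_rid_lTensor, rTensor_counit_comul]
  simp

end DualAction

section Comodule

open Coalgebra

variable {R A M : Type*} [CommRing R] [CommRing A] [HopfAlgebra R A] [AddCommGroup M] [Module R M]

variable (R A) in
lemma isComodule_comul : IsComodule R A (comul (R := R) (A := A)) :=
  ⟨Coalgebra.coassoc, by ext; simp⟩

variable (R A M) in
/-- The trivial coaction `m ↦ m ⊗ 1`, for which every element is invariant. -/
noncomputable def trivialCoaction : M →ₗ[R] M ⊗[R] A :=
  (TensorProduct.mk R M A).flip 1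

variable (R A M) in
lemma isComodule_trivialCoaction : IsComodule R A (trivialCoaction R A M) :=
  ⟨by ext; simp [trivialCoaction, Algebra.TensorProduct.one_def],
    by ext; simp [trivialCoaction]⟩

lemma dualAction_eq_smul_of_mem_comodInvariants {ρ : M →ₗ[R] M ⊗[R] A} (β : Module.Dual R A)
    {m : M} (hm : m ∈ comodInvariants R A ρ) : dualAction ρ β m = β 1 • m := by
  rw [dualAction_apply, show ρ m = m ⊗ₜ 1 from hm, LinearMap.lTensor_tmul, TensorProduct.rid_tmul]

lemma IsComodule.apply_dualAction {ρ : M →ₗ[R] M ⊗[R] A} (hρ : IsComodule R A ρ)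
    (β : Module.Dual R A) (m : M) :
    ρ (dualAction ρ β m) = (dualAction comul β).lTensor M (ρ m) := by
  have hassoc : (TensorProduct.rid R (M ⊗[R] A)).toLinearMap ∘ₗ β.lTensor (M ⊗[R] A) =
      ((TensorProduct.rid R A).toLinearMap ∘ₗ β.lTensor A).lTensor M ∘ₗ
        (TensorProduct.assoc R M A A).toLinearMap := by
    ext; simp
  have hcoassoc : TensorProduct.assoc R M A A (ρ.rTensor A (ρ m)) = comul.lTensor M (ρ m) :=
    LinearMap.congr_fun hρ.1 m
  calc ρ (dualAction ρ β m)
      = TensorProduct.rid R _ (β.lTensor _ (ρ.rTensor A (ρ m))) := map_rid_lTensor ρ β (ρ m)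
    _ = ((TensorProduct.rid R A).toLinearMap ∘ₗ β.lTensor A).lTensor M
          (TensorProduct.assoc R M A A (ρ.rTensor A (ρ m))) := LinearMap.congr_fun hassoc _
    _ = (dualAction comul β).lTensor M (ρ m) := by
        rw [hcoassoc, ← LinearMap.lTensor_comp_apply]
        rfl

end Comodule

section Integral

open Coalgebra WithConv

variable {R A : Type*} [CommRing R] [Ring A] [Bialgebra R A]

/-- `β` is a left integral in `A*`: `Σ β(a₂) a₁ = β(a) 1`, which says that `γ * β = γ(1) β` for
all `γ ∈ A*` when `A` is finite projective. -/
def IsLeftIntegral (β : Module.Dual R A) : Prop :=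
  ∀ a : A, dualAction comul β a = β a • (1 : A)

/-- `α` is a right integral in `A*`: `Σ α(a₁) a₂ = α(a) 1`. With `α 1 = 1` this is a total integral
for the trivial comodule algebra `R`. -/
def IsRightIntegral (α : Module.Dual R A) : Prop :=
  ∀ a : A, TensorProduct.lid R A (α.rTensor A (comul a)) = α a • (1 : A)

lemma isLeftIntegral_iff_convMul {β : Module.Dual R A} :
    IsLeftIntegral β ↔ toConv LinearMap.id * toConv (Algebra.linearMap R A ∘ₗ β) =
      toConv (Algebra.linearMap R A ∘ₗ β) := by
  have h : LinearMap.mul' R A ∘ₗ TensorProduct.map LinearMap.id (Algebra.linearMap R A ∘ₗ β) =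
      (TensorProduct.rid R A).toLinearMap ∘ₗ β.lTensor A := by
    ext; simp [Algebra.smul_def, Algebra.commutes]
  rw [WithConv.ext_iff, LinearMap.ext_iff]
  refine forall_congr' fun a ↦ ?_
  rw [dualAction_apply, Algebra.smul_def, mul_one]
  exact iff_of_eq (congrArg (· = _) (LinearMap.congr_fun h (comul a)).symm)

lemma isRightIntegral_iff_convMul {α : Module.Dual R A} :
    IsRightIntegral α ↔ toConv (Algebra.linearMap R A ∘ₗ α) * toConv LinearMap.id =
      toConv (Algebra.linearMap R A ∘ₗ α) := by
  have h : LinearMap.mul' R A ∘ₗ TensorProduct.map (Algebra.linearMap R A ∘ₗ α) LinearMap.id =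
      (TensorProduct.lid R A).toLinearMap ∘ₗ α.rTensor A := by
    ext; simp [Algebra.smul_def]
  rw [WithConv.ext_iff, LinearMap.ext_iff]
  refine forall_congr' fun a ↦ ?_
  rw [Algebra.smul_def, mul_one]
  exact iff_of_eq (congrArg (· = _) (LinearMap.congr_fun h (comul a)).symm)

end Integral

section Antipode

open Coalgebra HopfAlgebra WithConv

open Algebra.TensorProduct in
lemma toConv_comulAlgHom {R A : Type*} [CommRing R] [CommRing A] [Bialgebra R A] :
    toConv (Bialgebra.comulAlgHom R A) = toConv includeLeft * toConv includeRight := by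
  have h : Algebra.TensorProduct.lift includeLeft includeRight (fun _ _ ↦ .all ..) =
      AlgHom.id R (A ⊗[R] A) := by
    ext <;> simp
  ext a
  rw [AlgHom.convMul_apply]
  exact (DFunLike.congr_fun h (comul a)).symm

variable {R A : Type*} [CommRing R] [CommRing A] [HopfAlgebra R A]

-- Composition with the antipode is inversion in the convolution group of algebra maps
-- `A → A ⊗ A`, where `comul` is the product of the two inclusions.
lemma comul_comp_antipode :
    comul ∘ₗ antipode R (A := A) = TensorProduct.map (antipode R) (antipode R) ∘ₗ
      (TensorProduct.comm R A A).toLinearMap ∘ₗ comul := by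
  let ι₁ : A →ₐ[R] A ⊗[R] A := Algebra.TensorProduct.includeLeft
  let ι₂ : A →ₐ[R] A ⊗[R] A := Algebra.TensorProduct.includeRight
  let S := antipodeAlgHom R A
  have hinv : toConv ((Bialgebra.comulAlgHom R A).comp S) =
      toConv (ι₂.comp S) * toConv (ι₁.comp S) :=
    calc (toConv (Bialgebra.comulAlgHom R A))⁻¹ = (toConv ι₁ * toConv ι₂)⁻¹ := by
          rw [toConv_comulAlgHom]
      _ = (toConv ι₂)⁻¹ * (toConv ι₁)⁻¹ := mul_inv_rev (G := WithConv (A →ₐ[R] A ⊗[R] A)) _ _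
  have hlift : (Algebra.TensorProduct.lift (ι₂.comp S) (ι₁.comp S) fun _ _ ↦ .all ..) =
      (Algebra.TensorProduct.map S S).comp (Algebra.TensorProduct.comm R A A).toAlgHom := by
    ext <;> simp [ι₁, ι₂]
  ext a
  calc comul (antipode R a) = (toConv (ι₂.comp S) * toConv (ι₁.comp S)) a :=
        congrArg (fun φ : WithConv (A →ₐ[R] A ⊗[R] A) ↦ φ a) hinv
    _ = TensorProduct.map (antipode R) (antipode R) (TensorProduct.comm R A A (comul a)) := by
        rw [AlgHom.convMul_apply]
        exact DFunLike.congr_fun hlift (comul a)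

lemma convMul_comp_antipode {B : Type*} [CommRing B] [Algebra R B] (f g : A →ₗ[R] B) :
    (toConv f * toConv g).ofConv ∘ₗ antipode R =
      (toConv (g ∘ₗ antipode R) * toConv (f ∘ₗ antipode R)).ofConv := by
  have h : LinearMap.mul' R B ∘ₗ TensorProduct.map f g ∘ₗ
        TensorProduct.map (antipode R) (antipode R) ∘ₗ (TensorProduct.comm R A A).toLinearMap =
      LinearMap.mul' R B ∘ₗ TensorProduct.map (g ∘ₗ antipode R) (f ∘ₗ antipode R) := by
    ext; simp [mul_comm]
  calc LinearMap.mul' R B ∘ₗ TensorProduct.map f g ∘ₗ comul ∘ₗ antipode R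
      = LinearMap.mul' R B ∘ₗ TensorProduct.map f g ∘ₗ
          TensorProduct.map (antipode R) (antipode R) ∘ₗ
          (TensorProduct.comm R A A).toLinearMap ∘ₗ comul := by rw [comul_comp_antipode]
    _ = LinearMap.mul' R B ∘ₗ TensorProduct.map (g ∘ₗ antipode R) (f ∘ₗ antipode R) ∘ₗ comul :=
        congrArg (· ∘ₗ comul) h

lemma IsRightIntegral.comp_antipode {α : Module.Dual R A} (hα : IsRightIntegral α) :
    IsLeftIntegral (α ∘ₗ antipode R) := by
  rw [isRightIntegral_iff_convMul] at hα
  rw [isLeftIntegral_iff_convMul, ← LinearMap.comp_assoc]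
  set f := Algebra.linearMap R A ∘ₗ α
  have hf : toConv (f ∘ₗ antipode R) = toConv (antipode R) * toConv (f ∘ₗ antipode R) := by
    simpa only [hα, LinearMap.id_comp] using!
      congrArg toConv (convMul_comp_antipode f LinearMap.id)
  rw [hf, ← mul_assoc, LinearMap.id_mul_antipode, one_mul, ← hf]

lemma IsLeftIntegral.comp_antipode {β : Module.Dual R A} (hβ : IsLeftIntegral β) :
    IsRightIntegral (β ∘ₗ antipode R) := by
  rw [isLeftIntegral_iff_convMul] at hβ
  rw [isRightIntegral_iff_convMul, ← LinearMap.comp_assoc]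
  set f := Algebra.linearMap R A ∘ₗ β
  have hf : toConv (f ∘ₗ antipode R) = toConv (f ∘ₗ antipode R) * toConv (antipode R) := by
    simpa only [hβ, LinearMap.id_comp] using!
      congrArg toConv (convMul_comp_antipode LinearMap.id f)
  rw [hf, mul_assoc, LinearMap.antipode_mul_id, mul_one, ← hf]

end Antipode

section Averaging

variable {R A M N : Type*} [CommRing R] [CommRing A] [HopfAlgebra R A] [AddCommGroup M]
  [Module R M] [AddCommGroup N] [Module R N] {β : Module.Dual R A} {ρM : M →ₗ[R] M ⊗[R] A}

lemma IsLeftIntegral.dualAction_mem_comodInvariants (hβ : IsLeftIntegral β)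
    (hρM : IsComodule R A ρM) (m : M) : dualAction ρM β m ∈ comodInvariants R A ρM := by
  have hβ' : dualAction Coalgebra.comul β = LinearMap.toSpanSingleton R A 1 ∘ₗ β :=
    LinearMap.ext hβ
  have h : (LinearMap.toSpanSingleton R A 1 ∘ₗ β).lTensor M =
      trivialCoaction R A M ∘ₗ (TensorProduct.rid R M).toLinearMap ∘ₗ β.lTensor M := by
    ext; simp [trivialCoaction]
  calc ρM (dualAction ρM β m)
      = (dualAction Coalgebra.comul β).lTensor M (ρM m) := hρM.apply_dualAction β m
    _ = dualAction ρM β m ⊗ₜ 1 := by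
        rw [hβ', h]
        rfl

lemma IsLeftIntegral.exists_mem_comodInvariants_map_eq (hβ : IsLeftIntegral β)
    (hβ_one : β 1 = 1) (hρM : IsComodule R A ρM) {ρN : N →ₗ[R] N ⊗[R] A} {f : M →ₗ[R] N}
    (hf : ρN ∘ₗ f = f.rTensor A ∘ₗ ρM) (hsurj : Function.Surjective f) {n : N}
    (hn : n ∈ comodInvariants R A ρN) : ∃ m ∈ comodInvariants R A ρM, f m = n := by
  obtain ⟨m, rfl⟩ := hsurj n
  refine ⟨dualAction ρM β m, hβ.dualAction_mem_comodInvariants hρM m, ?_⟩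
  rw [map_dualAction hf, dualAction_eq_smul_of_mem_comodInvariants β hn, hβ_one, one_smul]

end Averaging

section DualComodule

open Coalgebra

variable (R A : Type*) [CommRing R] [CommRing A] [HopfAlgebra R A] [Module.Finite R A]
  [Module.Projective R A]

/-- The coaction of `A` on its dual corresponding, under `A* ⊗ A ≃ End(A)`, to the action
`β ↦ (a ↦ β ⇀ a)` of `A*` on `A`. -/
noncomputable def dualCoaction : Module.Dual R A →ₗ[R] Module.Dual R A ⊗[R] A :=
  (dualTensorHomEquiv R A A).symm.toLinearMap ∘ₗ dualAction comul

variable {R A}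

lemma dualTensorHom_dualCoaction (β : Module.Dual R A) :
    dualTensorHom R A A (dualCoaction R A β) = dualAction comul β :=
  (dualTensorHomEquiv R A A).apply_symm_apply _

lemma dualTensorHom_assoc_rTensor_dualCoaction (t : Module.Dual R A ⊗[R] A) :
    dualTensorHom R A (A ⊗[R] A)
        (TensorProduct.assoc R _ A A ((dualCoaction R A).rTensor A t)) =
      (dualTensorHom R A A t).lTensor A ∘ₗ comul := by
  induction t with
  | zero => simp
  | add s t hs ht => simp only [map_add, hs, ht, LinearMap.lTensor_add, LinearMap.add_comp]
  | tmul β b =>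
    have hassoc : dualTensorHom R A (A ⊗[R] A) ∘ₗ
          (TensorProduct.assoc R _ A A).toLinearMap ∘ₗ (TensorProduct.mk R _ A).flip b =
        ((TensorProduct.mk R A A).flip b).compRight R ∘ₗ dualTensorHom R A A := by
      ext; simp [TensorProduct.smul_tmul']
    have hslice : (TensorProduct.mk R A A).flip b ∘ₗ (TensorProduct.rid R A).toLinearMap ∘ₗ
          β.lTensor A = (dualTensorHom R A A (β ⊗ₜ b)).lTensor A := by
      ext; simp
    calc dualTensorHom R A (A ⊗[R] A)
          (TensorProduct.assoc R _ A A (dualCoaction R A β ⊗ₜ b))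
        = (TensorProduct.mk R A A).flip b ∘ₗ dualTensorHom R A A (dualCoaction R A β) :=
          LinearMap.congr_fun hassoc _
      _ = (dualTensorHom R A A (β ⊗ₜ b)).lTensor A ∘ₗ comul := by
          rw [dualTensorHom_dualCoaction, ← hslice]
          rfl

-- Under `A* ⊗ A ⊗ A ≃ Hom(A, A ⊗ A)`, coassociativity of `dualCoaction` becomes the identity
-- `comul (β ⇀ a) = Σ a₁ ⊗ (β ⇀ a₂)`.
lemma isComodule_dualCoaction : IsComodule R A (dualCoaction R A) := by
  constructor
  · ext β : 1
    apply (dualTensorHom_bijective (R := R) (M := A) (N := A ⊗[R] A)).injective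
    calc dualTensorHom R A (A ⊗[R] A)
          (TensorProduct.assoc R _ A A ((dualCoaction R A).rTensor A (dualCoaction R A β)))
        = (dualAction comul β).lTensor A ∘ₗ comul := by
          rw [dualTensorHom_assoc_rTensor_dualCoaction, dualTensorHom_dualCoaction]
      _ = comul ∘ₗ dualAction comul β :=
          LinearMap.ext fun a ↦ ((isComodule_comul R A).apply_dualAction β a).symm
      _ = dualTensorHom R A (A ⊗[R] A) (comul.lTensor _ (dualCoaction R A β)) := by
          rw [← dualTensorHom_dualCoaction]
          exact (LinearMap.congr_fun (dualTensorHom_comp_lTensor comul) _).symm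
  · ext β : 1
    calc TensorProduct.rid R _ (counit.lTensor _ (dualCoaction R A β))
        = dualTensorHom R A R (counit.lTensor _ (dualCoaction R A β)) := by
          rw [dualTensorHom_self_right, LinearEquiv.coe_coe]
      _ = counit ∘ₗ dualTensorHom R A A (dualCoaction R A β) :=
          LinearMap.congr_fun (dualTensorHom_comp_lTensor counit) _
      _ = β := by
          rw [dualTensorHom_dualCoaction]
          exact LinearMap.ext (counit_dualAction_comul β)

lemma mem_comodInvariants_dualCoaction {β : Module.Dual R A} :
    β ∈ comodInvariants R A (dualCoaction R A) ↔ IsLeftIntegral β :=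
  calc dualCoaction R A β = β ⊗ₜ 1
      ↔ dualTensorHom R A A (dualCoaction R A β) = dualTensorHom R A A (β ⊗ₜ 1) :=
        (dualTensorHom_bijective (R := R) (M := A) (N := A)).injective.eq_iff.symm
    _ ↔ ∀ a, dualAction comul β a = β a • (1 : A) := by
        rw [dualTensorHom_dualCoaction, LinearMap.ext_iff]
        rfl

lemma trivialCoaction_comp_applyₗ_one :
    trivialCoaction R A R ∘ₗ LinearMap.applyₗ (1 : A) =
      (LinearMap.applyₗ (1 : A)).rTensor A ∘ₗ dualCoaction R A := by
  have heval : (LinearMap.applyₗ (1 : A)).rTensor A =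
      TensorProduct.mk R R A 1 ∘ₗ LinearMap.applyₗ (1 : A) ∘ₗ dualTensorHom R A A := by
    ext; simp [TensorProduct.smul_tmul']
  have hone : (1 : A) ∈ comodInvariants R A comul := Bialgebra.comul_one
  ext β : 1
  calc trivialCoaction R A R (β 1)
      = 1 ⊗ₜ dualAction comul β 1 := by
        rw [dualAction_eq_smul_of_mem_comodInvariants β hone]
        simp [trivialCoaction, TensorProduct.smul_tmul']
    _ = 1 ⊗ₜ dualTensorHom R A A (dualCoaction R A β) 1 := by rw [dualTensorHom_dualCoaction]
    _ = (LinearMap.applyₗ 1).rTensor A (dualCoaction R A β) := (LinearMap.congr_fun heval _).symm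

end DualComodule

theorem invariants_exact_iff_total_integral_trivial_general
    {R A : Type u} [CommRing R] [CommRing A] [HopfAlgebra R A]
    [Module.Finite R A] [Module.Projective R A] :
    (∀ (M N : Type u) [AddCommGroup M] [Module R M] [AddCommGroup N] [Module R N]
      (ρM : M →ₗ[R] M ⊗[R] A), IsComodule R A ρM →
      ∀ (ρN : N →ₗ[R] N ⊗[R] A), IsComodule R A ρN →
      ∀ (f : M →ₗ[R] N), ρN ∘ₗ f = (f.rTensor A) ∘ₗ ρM →
        Function.Surjective f →
        ∀ n ∈ comodInvariants R A ρN, ∃ m ∈ comodInvariants R A ρM, f m = n) ↔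
    (∃ α : A →ₗ[R] R, α 1 = 1 ∧ ∀ a : A,
      (TensorProduct.lid R A) ((α.rTensor A) (Coalgebra.comul (R := R) a))
        = α a • (1 : A)) := by
  constructor
  · intro hexact
    have hsurj : Function.Surjective (LinearMap.applyₗ (1 : A) : Module.Dual R A →ₗ[R] R) :=
      fun r ↦ ⟨r • Coalgebra.counit, by simp⟩
    obtain ⟨β, hβ, hβ_one⟩ := hexact (Module.Dual R A) R
      (dualCoaction R A) isComodule_dualCoaction
      (trivialCoaction R A R) (isComodule_trivialCoaction R A R)
      (LinearMap.applyₗ 1) trivialCoaction_comp_applyₗ_one hsurj 1 rfl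
    exact ⟨β ∘ₗ HopfAlgebra.antipode R, by simpa using hβ_one,
      (mem_comodInvariants_dualCoaction.mp hβ).comp_antipode⟩
  · rintro ⟨α, hα_one, hα⟩ M N _ _ _ _ ρM hρM ρN - f hf hsurj n hn
    have hβ : IsLeftIntegral (α ∘ₗ HopfAlgebra.antipode R) := IsRightIntegral.comp_antipode hα
    exact hβ.exists_mem_comodInvariants_map_eq (by simpa using hα_one) hρM hf hsurj hn

/-- Suppose `R` is noetherian and `A` is finite projective over `R`.  Then the functor of
invariants on right `A`-comodules is exact (preserves surjections) -- i.e. the finite flat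
group scheme with Hopf algebra of functions `A` is linearly reductive -- if and only if
there is a total integral `α : A → R` for the trivial action: an `R`-linear map with
`α 1 = 1` and `Σ α(a₁) • a₂ = α(a) • 1` for all `a`. -/
theorem invariants_exact_iff_total_integral_trivial
    {R A : Type u} [CommRing R] [IsNoetherianRing R] [CommRing A] [HopfAlgebra R A]
    [Module.Finite R A] [Module.Projective R A] :
    (∀ (M N : Type u) [AddCommGroup M] [Module R M] [AddCommGroup N] [Module R N]
      (ρM : M →ₗ[R] M ⊗[R] A), IsComodule R A ρM →
      ∀ (ρN : N →ₗ[R] N ⊗[R] A), IsComodule R A ρN →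
      ∀ (f : M →ₗ[R] N), ρN ∘ₗ f = (f.rTensor A) ∘ₗ ρM →
        Function.Surjective f →
        ∀ n ∈ comodInvariants R A ρN, ∃ m ∈ comodInvariants R A ρM, f m = n) ↔
    (∃ α : A →ₗ[R] R, α 1 = 1 ∧ ∀ a : A,
      (TensorProduct.lid R A) ((α.rTensor A) (Coalgebra.comul (R := R) a))
        = α a • (1 : A)) :=
  invariants_exact_iff_total_integral_trivial_general
end
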